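/- (Global existence and subsequential convergence of the second flow) Let ρ > 0 and let h : V → ℝ change sign with max_{x∈V} h(x) > 0. For any initial function u₀ : V → ℝ with ∫_V h e^{u₀} dμ = 1: (i) there exists a unique function u : V × [0, +∞) → ℝ, differentiable in t, solving ∂_t u = α(t)h − R with u(·,0) = u₀; (ii) there exist an increasing sequence t_n → +∞ and a function u_∞ : V → ℝ with ∫_V h e^{u_∞} dμ = 1 such that u(x, t_n) → u_∞(x) uniformly in x ∈ V as n → +∞, and u_∞ solves Lu_∞(x) = ρ h(x) e^{u_∞(x)} − ρ/|V| for every x ∈ V, i.e. u_∞ solves the fractional mean field equation. -/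

import Mathlib

open Real Finset

variable {V : Type*}

/-- Discrete integral: `∫_V f dμ = Σ_x μ(x) f(x)`. -/
noncomputable def intV [Fintype V] (μ f : V → ℝ) : ℝ := ∑ x, μ x * f x

/-- Volume `|V| = Σ_x μ(x)`. -/
noncomputable def volV [Fintype V] (μ : V → ℝ) : ℝ := ∑ x, μ x

/-- The nonlocal (fractional graph Laplacian type) operator
`Lu(x) = (1/μ(x)) Σ_{y ≠ x} W(x,y)(u(x) − u(y))`. -/
noncomputable def opL [Fintype V] [DecidableEq V] (μ : V → ℝ) (W : V → V → ℝ)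
    (u : V → ℝ) (x : V) : ℝ :=
  (1 / μ x) * ∑ y ∈ univ.filter (fun y => y ≠ x), W x y * (u x - u y)

/-- Gradient form `∇u·∇v(x) = (1/(2μ(x))) Σ_{y ≠ x} W(x,y)(u(x)−u(y))(v(x)−v(y))`. -/
noncomputable def gradForm [Fintype V] [DecidableEq V] (μ : V → ℝ) (W : V → V → ℝ)
    (u v : V → ℝ) (x : V) : ℝ :=
  (1 / (2 * μ x)) * ∑ y ∈ univ.filter (fun y => y ≠ x), W x y * (u x - u y) * (v x - v y)

/-- `|∇u|²(x) = ∇u·∇u(x)`. -/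
noncomputable def gradSq [Fintype V] [DecidableEq V] (μ : V → ℝ) (W : V → V → ℝ)
    (u : V → ℝ) (x : V) : ℝ := gradForm μ W u u x


/-- The scalar curvature type function `R = (1/ρ) e^{−u} (Lu + ρ/|V|)`. -/
noncomputable def Rcurv [Fintype V] [DecidableEq V] (μ : V → ℝ) (W : V → V → ℝ)
    (ρ : ℝ) (u : V → ℝ) (x : V) : ℝ :=
  (1 / ρ) * Real.exp (-(u x)) * (opL μ W u x + ρ / volV μ)

/-- The normalized coefficient `α = (∫_V h R e^u dμ) / (∫_V h² e^u dμ)`. -/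
noncomputable def alphaC [Fintype V] [DecidableEq V] (μ : V → ℝ) (W : V → V → ℝ)
    (ρ : ℝ) (h : V → ℝ) (u : V → ℝ) : ℝ :=
  intV μ (fun x => h x * Rcurv μ W ρ u x * Real.exp (u x)) /
    intV μ (fun x => (h x) ^ 2 * Real.exp (u x))

/-!
The coefficient `α` makes the flow tangent to the constraint set `{∫_V h eᵘ = 1}`, and along the
flow the energy `½ ∫_V |∇u|² + (ρ/|V|) ∫_V u` decreases at the rate `ρ ∫_V eᵘ (α h - R)²`. Since the
energy is coercive on the constraint set, trajectories stay bounded, hence exist for all time. The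
bounded decreasing energy has small derivative along some sequence of times; at a limit point `w` of
the trajectory along it, `α h - R = 0` and `∫_V h eʷ = 1`, and integrating `Lw + ρ/|V| = ρ α h eʷ`
over `V` gives `α = 1`, so that `w` solves the mean field equation.
-/

open Filter Topology

section ForwardODE

variable {E : Type*} [NormedAddCommGroup E] [NormedSpace ℝ E]

/-- `u` runs along the trajectories of the vector field `F` for `t ≥ 0`, at a nonnegative and
possibly varying speed: `u' = c(t) F(u)` with `c ≥ 0`. Conserved and monotone quantities of
`x' = F(x)` remain so along such curves. -/
def IsTimeChangedSolution (F : E → E) (u : ℝ → E) : Prop :=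
  ∀ t, 0 ≤ t → ∃ c : ℝ, 0 ≤ c ∧ HasDerivAt u (c • F (u t)) t

theorem isTimeChangedSolution_of_hasDerivAt {F : E → E} {u : ℝ → E}
    (hu : ∀ t, 0 ≤ t → HasDerivAt u (F (u t)) t) : IsTimeChangedSolution F u :=
  fun t ht => ⟨1, zero_le_one, by simpa only [one_smul] using hu t ht⟩

theorem exists_isIntegralCurve_of_hasCompactSupport [CompleteSpace E] {G : E → E}
    (hG : ContDiff ℝ 1 G) (hsupp : HasCompactSupport G) (x₀ : E) :
    ∃ u : ℝ → E, u 0 = x₀ ∧ IsIntegralCurve u fun _ => G := by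
  obtain ⟨K, hK⟩ := hG.lipschitzWith_of_hasCompactSupport hsupp one_ne_zero
  obtain ⟨L, hL⟩ := hsupp.exists_bound_of_continuous hG.continuous
  have hlocal (a : ℝ) : ∃ γ : ℝ → E, γ 0 = x₀ ∧
      IsMIntegralCurveOn (I := modelWithCornersSelf ℝ E) γ G (Set.Ioo (-a) a) := by
    have hmem : (0 : ℝ) ∈ Set.Icc (-|a|) |a| := ⟨neg_nonpos.2 (abs_nonneg a), abs_nonneg a⟩
    have hpl : IsPicardLindelof (fun _ => G) ⟨0, hmem⟩ x₀ (L.toNNReal * ‖a‖₊) 0 L.toNNReal K :=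
      .of_time_independent (fun x _ => (hL x).trans L.le_coe_toNNReal) hK.lipschitzOnWith
        (by simp)
    obtain ⟨γ, hγ₀, hγ⟩ := hpl.exists_eq_forall_mem_Icc_hasDerivWithinAt₀
    have hsub : Set.Ioo (-a) a ⊆ Set.Icc (-|a|) |a| := fun t ht =>
      abs_le.1 ((abs_lt.2 ht).le.trans (le_abs_self a))
    exact ⟨γ, hγ₀, fun t ht =>
      (((hγ t (hsub ht)).mono hsub).hasFDerivWithinAt).hasMFDerivWithinAt⟩
  obtain ⟨u, hu₀, hu⟩ := (exists_isMIntegralCurve_iff_exists_isMIntegralCurveOn_Ioo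
    (contMDiff_vectorSpace_iff_contDiff.2 hG) x₀).2 hlocal
  exact ⟨u, hu₀, fun t => hasDerivAt_iff_hasFDerivAt.2 (hu t).hasFDerivAt⟩

-- Cutting `F` off outside a large ball only changes the speed of its trajectories, so the a priori
-- bound applies to the truncated equation and keeps its solution where nothing was cut.
theorem exists_forward_solution_of_bounded [FiniteDimensional ℝ E] {F : E → E}
    (hF : ContDiff ℝ 1 F) {x₀ : E} {M : ℝ}
    (hbound : ∀ u : ℝ → E, u 0 = x₀ → IsTimeChangedSolution F u → ∀ t, 0 ≤ t → ‖u t‖ ≤ M) :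
    ∃ u : ℝ → E, u 0 = x₀ ∧ ∀ t, 0 ≤ t → HasDerivAt u (F (u t)) t := by
  have := FiniteDimensional.complete ℝ E
  let χ : ContDiffBump (0 : E) := ⟨|M| + 1, |M| + 2, by positivity, by linarith⟩
  obtain ⟨u, hu₀, hu⟩ := exists_isIntegralCurve_of_hasCompactSupport
    (χ.contDiff.smul hF) (χ.hasCompactSupport.smul_right (f' := F)) x₀
  have hle := hbound u hu₀ fun t _ => ⟨χ (u t), χ.nonneg, hu t⟩
  refine ⟨u, hu₀, fun t ht => ?_⟩
  have hχ : χ (u t) = 1 := χ.one_of_mem_closedBall <| mem_closedBall_zero_iff.2 <| by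
    change ‖u t‖ ≤ |M| + 1
    linarith [hle t ht, le_abs_self M]
  simpa only [Pi.smul_apply', hχ, one_smul] using hu t

theorem forward_solution_unique {F : E → E} (hF : LocallyLipschitz F) {u v : ℝ → E}
    (hu : ∀ t, 0 ≤ t → HasDerivAt u (F (u t)) t) (hv : ∀ t, 0 ≤ t → HasDerivAt v (F (v t)) t)
    (h₀ : u 0 = v 0) {t : ℝ} (ht : 0 ≤ t) : u t = v t := by
  have hcu : ContinuousOn u (Set.Icc 0 t) := HasDerivAt.continuousOn fun s hs => hu s hs.1
  have hcv : ContinuousOn v (Set.Icc 0 t) := HasDerivAt.continuousOn fun s hs => hv s hs.1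
  obtain ⟨K, hK⟩ := hF.locallyLipschitzOn.exists_lipschitzOnWith_of_compact
    ((isCompact_Icc.image_of_continuousOn hcu).union (isCompact_Icc.image_of_continuousOn hcv))
  exact ODE_solution_unique_of_mem_Icc_right (fun _ _ => hK)
    hcu (fun s hs => (hu s hs.1).hasDerivWithinAt)
    (fun s hs => .inl (Set.mem_image_of_mem u (Set.Ico_subset_Icc_self hs)))
    hcv (fun s hs => (hv s hs.1).hasDerivWithinAt)
    (fun s hs => .inr (Set.mem_image_of_mem v (Set.Ico_subset_Icc_self hs)))
    h₀ (Set.right_mem_Icc.2 ht)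

end ForwardODE

section Lyapunov

theorem exists_strictMono_tendsto_deriv_zero {f f' : ℝ → ℝ} {l : ℝ}
    (hf : ∀ t, 0 ≤ t → HasDerivAt f (f' t) t)
    (hl : Tendsto (fun n : ℕ => f n) atTop (𝓝 l)) :
    ∃ s : ℕ → ℝ, StrictMono s ∧ (∀ n : ℕ, (n : ℝ) < s n) ∧
      Tendsto (fun n => f' (s n)) atTop (𝓝 0) := by
  have hmvt (n : ℕ) : ∃ t ∈ Set.Ioo (n : ℝ) (n + 1 : ℕ), f' t = f (n + 1 : ℕ) - f n := by
    have hderiv (t : ℝ) (ht : (n : ℝ) ≤ t) := hf t (n.cast_nonneg.trans ht)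
    obtain ⟨t, ht, hslope⟩ := exists_hasDerivAt_eq_slope f f' (Nat.cast_lt.2 n.lt_succ_self)
      (HasDerivAt.continuousOn fun t ht => hderiv t ht.1) (fun t ht => hderiv t ht.1.le)
    exact ⟨t, ht, by simpa using hslope⟩
  choose s hs hslope using hmvt
  refine ⟨s, strictMono_nat_of_lt_succ fun n => (hs n).2.trans (hs (n + 1)).1,
    fun n => (hs n).1, ?_⟩
  simpa only [hslope, sub_self, Function.comp_def] using (hl.comp (tendsto_add_atTop_nat 1)).sub hl

theorem exists_tendsto_dissipation_eq_zero {X : Type*} [TopologicalSpace X]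
    [FirstCountableTopology X] {K : Set X} (hK : IsCompact K) {J D : X → ℝ} (hJ : Continuous J)
    (hD : Continuous D) (hD₀ : ∀ x, 0 ≤ D x) {u : ℝ → X} (huK : ∀ t, 0 ≤ t → u t ∈ K)
    (hu : ∀ t, 0 ≤ t → HasDerivAt (fun s => J (u s)) (-D (u t)) t) :
    ∃ s : ℕ → ℝ, StrictMono s ∧ (∀ n : ℕ, (n : ℝ) ≤ s n) ∧
      ∃ w, Tendsto (fun n => u (s n)) atTop (𝓝 w) ∧ D w = 0 := by
  have hanti : AntitoneOn (fun t => J (u t)) (Set.Ici 0) :=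
    antitoneOn_of_hasDerivWithinAt_nonpos (convex_Ici 0)
      (HasDerivAt.continuousOn hu)
      (fun t ht => (hu t (interior_subset ht)).hasDerivWithinAt)
      (fun t _ => neg_nonpos.2 (hD₀ (u t)))
  have hantiNat : Antitone fun n : ℕ => J (u n) := fun m n hmn =>
    hanti (Set.mem_Ici.2 m.cast_nonneg) (Set.mem_Ici.2 n.cast_nonneg) (Nat.cast_le.2 hmn)
  have hbdd : BddBelow (Set.range fun n : ℕ => J (u n)) :=
    (hK.bddBelow_image hJ.continuousOn).mono <|
      Set.range_subset_iff.2 fun n => Set.mem_image_of_mem J (huK n n.cast_nonneg)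
  obtain ⟨s, hs, hns, hlim⟩ :=
    exists_strictMono_tendsto_deriv_zero hu (tendsto_atTop_ciInf hantiNat hbdd)
  obtain ⟨w, -, φ, hφ, hw⟩ :=
    hK.tendsto_subseq fun n => huK (s n) (n.cast_nonneg.trans (hns n).le)
  refine ⟨s ∘ φ, hs.comp hφ, fun n => ?_, w, hw, ?_⟩
  · exact (Nat.cast_le.2 hφ.le_apply).trans (hns (φ n)).le
  · refine tendsto_nhds_unique ((hD.tendsto w).comp hw) ?_
    simpa [Function.comp_def] using hlim.neg.comp hφ.tendsto_atTop

end Lyapunov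

section GraphCalculus

variable [Fintype V]

theorem volV_pos [Nonempty V] {μ : V → ℝ} (hμ : ∀ x, 0 < μ x) : 0 < volV μ :=
  sum_pos (fun x _ => hμ x) univ_nonempty

theorem intV_const (μ : V → ℝ) (c : ℝ) : intV μ (fun _ => c) = c * volV μ := by
  rw [intV, volV, mul_sum]
  exact sum_congr rfl fun x _ => mul_comm _ _

theorem intV_add (μ f g : V → ℝ) : intV μ (fun x => f x + g x) = intV μ f + intV μ g := by
  simp only [intV, mul_add, sum_add_distrib]

theorem intV_const_mul (μ : V → ℝ) (c : ℝ) (f : V → ℝ) :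
    intV μ (fun x => c * f x) = c * intV μ f := by
  simp only [intV, mul_sum, mul_left_comm]

theorem intV_mono {μ f g : V → ℝ} (hμ : ∀ x, 0 ≤ μ x) (hfg : ∀ x, f x ≤ g x) :
    intV μ f ≤ intV μ g :=
  sum_le_sum fun x _ => mul_le_mul_of_nonneg_left (hfg x) (hμ x)

theorem intV_nonneg {μ f : V → ℝ} (hμ : ∀ x, 0 ≤ μ x) (hf : ∀ x, 0 ≤ f x) : 0 ≤ intV μ f :=
  sum_nonneg fun x _ => mul_nonneg (hμ x) (hf x)

theorem intV_eq_zero_iff_of_nonneg {μ f : V → ℝ} (hμ : ∀ x, 0 < μ x) (hf : ∀ x, 0 ≤ f x) :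
    intV μ f = 0 ↔ f = 0 := by
  simp [intV, sum_eq_zero_iff_of_nonneg fun x _ => mul_nonneg (hμ x).le (hf x), funext_iff,
    fun x => (hμ x).ne']

theorem neg_log_intV_abs_le {μ h u : V → ℝ} (hμ : ∀ x, 0 ≤ μ x)
    (hu : intV μ (fun x => h x * exp (u x)) = 1) {m : ℝ} (hm : ∀ x, u x ≤ m) :
    -log (intV μ fun x => |h x|) ≤ m := by
  have hle : 1 ≤ exp m * intV μ fun x => |h x| := by
    rw [← hu, ← intV_const_mul]
    refine intV_mono hμ fun x => ?_
    calc h x * exp (u x) ≤ |h x| * exp m := by gcongr; exacts [le_abs_self _, hm x]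
      _ = exp m * |h x| := mul_comm _ _
  rw [neg_le, ← log_exp (-m), exp_neg]
  exact log_le_log (inv_pos.2 (exp_pos m)) ((inv_le_iff_one_le_mul₀' (exp_pos m)).2 hle)

theorem hasDerivAt_intV (μ : V → ℝ) {f : ℝ → V → ℝ} {f' : V → ℝ} {t : ℝ}
    (hf : ∀ x, HasDerivAt (fun s => f s x) (f' x) t) :
    HasDerivAt (fun s => intV μ (f s)) (intV μ f') t :=
  .fun_sum fun x _ => (hf x).const_mul (μ x)

variable [DecidableEq V]

theorem mul_opL {μ : V → ℝ} (hμ : ∀ x, μ x ≠ 0) (W : V → V → ℝ) (u : V → ℝ) (x : V) :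
    μ x * opL μ W u x = ∑ y, W x y * (u x - u y) := by
  rw [opL, one_div, mul_inv_cancel_left₀ (hμ x)]
  exact sum_filter_of_ne fun y _ hy hyx => hy (by simp [hyx])

theorem intV_gradForm {μ : V → ℝ} (hμ : ∀ x, μ x ≠ 0) (W : V → V → ℝ) (u v : V → ℝ) :
    intV μ (gradForm μ W u v) = 1 / 2 * ∑ x, ∑ y, W x y * (u x - u y) * (v x - v y) := by
  rw [intV, mul_sum]
  refine sum_congr rfl fun x _ => ?_
  have hsum : ∑ y ∈ univ.filter (fun y => y ≠ x), W x y * (u x - u y) * (v x - v y) =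
      ∑ y, W x y * (u x - u y) * (v x - v y) :=
    sum_filter_of_ne fun y _ hy hyx => hy (by simp [hyx])
  have hμx := hμ x
  rw [gradForm, hsum]
  field_simp

theorem intV_opL_mul {μ : V → ℝ} (hμ : ∀ x, μ x ≠ 0) {W : V → V → ℝ}
    (hW : ∀ x y, W x y = W y x) (u v : V → ℝ) :
    intV μ (fun x => opL μ W u x * v x) = intV μ (gradForm μ W u v) := by
  have hleft : intV μ (fun x => opL μ W u x * v x) = ∑ x, ∑ y, W x y * (u x - u y) * v x := by
    simp only [intV, ← mul_assoc, mul_opL hμ, sum_mul]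
  have hswap : ∑ x, ∑ y, W x y * (u x - u y) * v y = -∑ x, ∑ y, W x y * (u x - u y) * v x := by
    rw [sum_comm]
    simp only [← sum_neg_distrib]
    exact sum_congr rfl fun x _ => sum_congr rfl fun y _ => by rw [hW y x]; ring
  rw [hleft, intV_gradForm hμ]
  simp only [mul_sub _ (v _) (v _), sum_sub_distrib, hswap]
  ring

theorem intV_opL {μ : V → ℝ} (hμ : ∀ x, μ x ≠ 0) {W : V → V → ℝ} (hW : ∀ x y, W x y = W y x)
    (u : V → ℝ) : intV μ (opL μ W u) = 0 := by
  simpa [gradForm, intV] using intV_opL_mul hμ hW u 1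

theorem hasDerivAt_gradSq (μ : V → ℝ) (W : V → V → ℝ) {u : ℝ → V → ℝ} {w : V → ℝ} {t : ℝ}
    (hu : HasDerivAt u w t) (x : V) :
    HasDerivAt (fun s => gradSq μ W (u s) x) (2 * gradForm μ W (u t) w x) t := by
  have hdiff (y : V) : HasDerivAt (fun s => u s x - u s y) (w x - w y) t :=
    (hasDerivAt_pi.1 hu x).sub (hasDerivAt_pi.1 hu y)
  refine (HasDerivAt.const_mul (1 / (2 * μ x)) (.fun_sum fun y _ =>
    ((hdiff y).const_mul (W x y)).mul (hdiff y))).congr_deriv ?_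
  rw [gradForm, mul_left_comm 2, mul_sum _ _ (2 : ℝ)]
  exact congrArg _ (sum_congr rfl fun y _ => by ring)

end GraphCalculus

section MeanFieldEnergy

variable [Fintype V] [DecidableEq V] {μ : V → ℝ} {W : V → V → ℝ} {ρ : ℝ}

/-- The Dirichlet part `½ ∫_V |∇u|² + (ρ/|V|) ∫_V u` of the mean field functional, without its
logarithmic term `ρ log ∫_V h eᵘ`, which vanishes on the constraint `∫_V h eᵘ = 1`. -/
noncomputable def meanFieldEnergy (μ : V → ℝ) (W : V → V → ℝ) (ρ : ℝ) (u : V → ℝ) : ℝ :=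
  1 / 2 * intV μ (gradSq μ W u) + ρ / volV μ * intV μ u

theorem continuous_meanFieldEnergy (μ : V → ℝ) (W : V → V → ℝ) (ρ : ℝ) :
    Continuous (meanFieldEnergy μ W ρ) := by
  unfold meanFieldEnergy intV gradSq gradForm
  fun_prop

theorem hasDerivAt_meanFieldEnergy (hμ : ∀ x, μ x ≠ 0) (hW : ∀ x y, W x y = W y x) (ρ : ℝ)
    {u : ℝ → V → ℝ} {w : V → ℝ} {t : ℝ} (hu : HasDerivAt u w t) :
    HasDerivAt (fun s => meanFieldEnergy μ W ρ (u s))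
      (intV μ fun x => (opL μ W (u t) x + ρ / volV μ) * w x) t := by
  have hgrad := (hasDerivAt_intV μ (hasDerivAt_gradSq μ W hu)).const_mul (1 / 2)
  have hmean := (hasDerivAt_intV μ (hasDerivAt_pi.1 hu)).const_mul (ρ / volV μ)
  refine (hgrad.add hmean).congr_deriv ?_
  simp only [add_mul, intV_add, intV_const_mul, intV_opL_mul hμ hW]
  ring

theorem mul_sq_sub_le_intV_gradSq (hμ : ∀ x, μ x ≠ 0) (hW : ∀ x y, x ≠ y → 0 ≤ W x y)
    (u : V → ℝ) (x y : V) : W x y * (u x - u y) ^ 2 ≤ 2 * intV μ (gradSq μ W u) := by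
  have hterm (a b : V) : 0 ≤ W a b * (u a - u b) ^ 2 := by
    rcases eq_or_ne a b with rfl | hab
    · simp
    · exact mul_nonneg (hW a b hab) (sq_nonneg _)
  calc W x y * (u x - u y) ^ 2
      ≤ ∑ b, W x b * (u x - u b) ^ 2 :=
        single_le_sum (f := fun b => W x b * (u x - u b) ^ 2) (fun b _ => hterm x b) (mem_univ y)
    _ ≤ ∑ a, ∑ b, W a b * (u a - u b) ^ 2 :=
        single_le_sum (f := fun a => ∑ b, W a b * (u a - u b) ^ 2)
          (fun a _ => sum_nonneg fun b _ => hterm a b) (mem_univ x)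
    _ = 2 * intV μ (gradSq μ W u) := by
        unfold gradSq
        simp only [intV_gradForm hμ, mul_assoc, sq]
        ring

theorem exists_sq_sub_le_of_reflTransGen (hμ : ∀ x, μ x ≠ 0) (hW : ∀ x y, x ≠ y → 0 ≤ W x y)
    {x y : V} (hxy : Relation.ReflTransGen (fun a b => 0 < W a b) x y) :
    ∃ C, ∀ u : V → ℝ, (u x - u y) ^ 2 ≤ C * intV μ (gradSq μ W u) := by
  induction hxy with
  | refl => exact ⟨0, fun u => by simp⟩
  | @tail b c _ hbc ih =>
    obtain ⟨C, hC⟩ := ih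
    refine ⟨2 * C + 2 * (2 / W b c), fun u => ?_⟩
    have hedge : (u b - u c) ^ 2 ≤ 2 / W b c * intV μ (gradSq μ W u) := by
      rw [div_mul_eq_mul_div, le_div_iff₀' hbc]
      exact mul_sq_sub_le_intV_gradSq hμ hW u b c
    linarith [hC u, sq_nonneg ((u x - u b) - (u b - u c)),
      show (u x - u c) ^ 2 + ((u x - u b) - (u b - u c)) ^ 2 =
        2 * (u x - u b) ^ 2 + 2 * (u b - u c) ^ 2 by ring]

theorem intV_gradSq_nonneg (hμ : ∀ x, μ x ≠ 0) (hW : ∀ x y, x ≠ y → 0 ≤ W x y)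
    (u : V → ℝ) : 0 ≤ intV μ (gradSq μ W u) := by
  rcases isEmpty_or_nonempty V with _ | ⟨⟨x⟩⟩
  · simp [intV]
  · simpa using mul_sq_sub_le_intV_gradSq hμ hW u x x

theorem exists_sq_sub_le_intV_gradSq (hμ : ∀ x, μ x ≠ 0) (hW : ∀ x y, x ≠ y → 0 ≤ W x y)
    (hconn : ∀ x y, Relation.ReflTransGen (fun a b => 0 < W a b) x y) :
    ∃ C, 0 ≤ C ∧ ∀ (u : V → ℝ) (x y : V), (u x - u y) ^ 2 ≤ C * intV μ (gradSq μ W u) := by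
  choose C hC using fun p : V × V => exists_sq_sub_le_of_reflTransGen hμ hW (hconn p.1 p.2)
  refine ⟨∑ p, |C p|, sum_nonneg fun p _ => abs_nonneg (C p), fun u x y => ?_⟩
  have hle : C (x, y) ≤ ∑ p, |C p| := (le_abs_self _).trans <|
    single_le_sum (f := fun p => |C p|) (fun p _ => abs_nonneg (C p)) (mem_univ (x, y))
  exact (hC (x, y) u).trans (mul_le_mul_of_nonneg_right hle (intV_gradSq_nonneg hμ hW u))

theorem intV_gradSq_add_le_meanFieldEnergy [Nonempty V] (hμ : ∀ x, 0 < μ x) (hρ : 0 ≤ ρ)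
    {u : V → ℝ} {m : ℝ} (hm : ∀ x, m ≤ u x) :
    1 / 2 * intV μ (gradSq μ W u) + ρ * m ≤ meanFieldEnergy μ W ρ u := by
  have hvol := volV_pos hμ
  have hmean : m * volV μ ≤ intV μ u := intV_const μ m ▸ intV_mono (fun x => (hμ x).le) hm
  calc 1 / 2 * intV μ (gradSq μ W u) + ρ * m
      = 1 / 2 * intV μ (gradSq μ W u) + ρ / volV μ * (m * volV μ) := by field_simp
    _ ≤ meanFieldEnergy μ W ρ u := by unfold meanFieldEnergy; gcongr

theorem le_abs_add_abs_add_one_of_sq_le {d p q : ℝ} (h : d ^ 2 ≤ p * d + q) :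
    d ≤ |p| + |q| + 1 := by
  by_contra! hd
  nlinarith [le_abs_self p, le_abs_self q, abs_nonneg p, abs_nonneg q]

-- The constraint bounds `max u` below, the Poincaré inequality bounds the oscillation `d` of `u` by
-- a multiple of `‖∇u‖`, so the energy grows quadratically in `d` against a loss linear in `d`.
theorem exists_norm_le_of_meanFieldEnergy_le [Nonempty V] (hμ : ∀ x, 0 < μ x)
    (hW : ∀ x y, x ≠ y → 0 ≤ W x y)
    (hconn : ∀ x y, Relation.ReflTransGen (fun a b => 0 < W a b) x y) (hρ : 0 < ρ)
    (h : V → ℝ) (A : ℝ) :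
    ∃ C, ∀ u : V → ℝ, intV μ (fun x => h x * exp (u x)) = 1 → meanFieldEnergy μ W ρ u ≤ A →
      ‖u‖ ≤ C := by
  have hμ' (x : V) : μ x ≠ 0 := (hμ x).ne'
  obtain ⟨C, hC₀, hC⟩ := exists_sq_sub_le_intV_gradSq hμ' hW hconn
  set B := log (intV μ fun x => |h x|)
  set D := |2 * C * ρ| + |2 * C * (A + ρ * B)| + 1
  refine ⟨max (A / ρ + D) (B + D), fun u hu hA => ?_⟩
  obtain ⟨xmax, hmax⟩ := Finite.exists_max u
  obtain ⟨xmin, hmin⟩ := Finite.exists_min u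
  have hB : -B ≤ u xmax := neg_log_intV_abs_le (fun x => (hμ x).le) hu hmax
  have henergy : 1 / 2 * intV μ (gradSq μ W u) + ρ * u xmin ≤ A :=
    (intV_gradSq_add_le_meanFieldEnergy hμ hρ.le hmin).trans hA
  have hgrad : 1 / 2 * intV μ (gradSq μ W u) ≤ A + ρ * B + ρ * (u xmax - u xmin) := by
    linarith [mul_le_mul_of_nonneg_left hB hρ.le]
  have hosc : u xmax - u xmin ≤ D := le_abs_add_abs_add_one_of_sq_le <| by
    calc (u xmax - u xmin) ^ 2 ≤ 2 * C * (1 / 2 * intV μ (gradSq μ W u)) := by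
          linarith [hC u xmax xmin]
      _ ≤ 2 * C * (A + ρ * B + ρ * (u xmax - u xmin)) := by
          gcongr
      _ = 2 * C * ρ * (u xmax - u xmin) + 2 * C * (A + ρ * B) := by ring
  have hupper : u xmin ≤ A / ρ := by
    rw [le_div_iff₀' hρ]
    linarith [intV_gradSq_nonneg hμ' hW u]
  refine (pi_norm_le_iff_of_nonempty u).2 fun x => abs_le.2 ⟨?_, ?_⟩
  · linarith [hmin x, le_max_right (A / ρ + D) (B + D)]
  · linarith [hmax x, le_max_left (A / ρ + D) (B + D)]

end MeanFieldEnergy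

section SecondFlow

variable [Fintype V] {μ : V → ℝ} {W : V → V → ℝ} {ρ : ℝ} {h : V → ℝ}

theorem ne_zero_of_intV_mul_exp_eq_one {u : V → ℝ} (hu : intV μ (fun x => h x * exp (u x)) = 1) :
    h ≠ 0 := by
  rintro rfl
  simp [intV] at hu

theorem intV_sq_mul_exp_ne_zero (hμ : ∀ x, 0 < μ x) (hh : h ≠ 0) (u : V → ℝ) :
    intV μ (fun x => h x ^ 2 * exp (u x)) ≠ 0 := by
  refine fun h₀ => hh (funext fun x => ?_)
  simpa using congrFun ((intV_eq_zero_iff_of_nonneg hμ fun x => by positivity).1 h₀) x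

variable [DecidableEq V]

/-- The vector field `α(u) h - R(u)` on functions on `V` whose trajectories form the second
flow. -/
noncomputable def secondFlowField (μ : V → ℝ) (W : V → V → ℝ) (ρ : ℝ) (h u : V → ℝ) (x : V) : ℝ :=
  alphaC μ W ρ h u * h x - Rcurv μ W ρ u x

/-- The dissipation `ρ ∫_V eᵘ (α h - R)²`: the rate at which the second flow decreases
`meanFieldEnergy`. -/
noncomputable def secondFlowDissipation (μ : V → ℝ) (W : V → V → ℝ) (ρ : ℝ) (h u : V → ℝ) : ℝ :=
  ρ * intV μ fun x => exp (u x) * secondFlowField μ W ρ h u x ^ 2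

theorem contDiff_secondFlowField (hμ : ∀ x, 0 < μ x) (W : V → V → ℝ) (ρ : ℝ) (hh : h ≠ 0) :
    ContDiff ℝ 1 (secondFlowField μ W ρ h) := by
  have hR (x : V) : ContDiff ℝ 1 fun u => Rcurv μ W ρ u x := by
    unfold Rcurv opL
    fun_prop
  have hα : ContDiff ℝ 1 (alphaC μ W ρ h) := by
    refine ContDiff.div ?_ ?_ (intV_sq_mul_exp_ne_zero hμ hh) <;> unfold intV <;> fun_prop
  exact contDiff_pi.2 fun x => (hα.mul contDiff_const).sub (hR x)

theorem continuous_secondFlowDissipation (hμ : ∀ x, 0 < μ x) (W : V → V → ℝ) (ρ : ℝ) (hh : h ≠ 0) :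
    Continuous (secondFlowDissipation μ W ρ h) := by
  have hF := (contDiff_secondFlowField hμ W ρ hh).continuous
  unfold secondFlowDissipation intV
  fun_prop

theorem secondFlowDissipation_nonneg (hμ : ∀ x, 0 ≤ μ x) (W : V → V → ℝ) (hρ : 0 ≤ ρ)
    (h u : V → ℝ) : 0 ≤ secondFlowDissipation μ W ρ h u :=
  mul_nonneg hρ (intV_nonneg hμ fun x => by positivity)

theorem secondFlowDissipation_eq_zero_iff (hμ : ∀ x, 0 < μ x) (hρ : ρ ≠ 0) {u : V → ℝ} :
    secondFlowDissipation μ W ρ h u = 0 ↔ secondFlowField μ W ρ h u = 0 := by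
  rw [secondFlowDissipation, mul_eq_zero_iff_left hρ,
    intV_eq_zero_iff_of_nonneg hμ fun x => by positivity]
  simp [funext_iff]

theorem opL_add_eq_mul_Rcurv (μ : V → ℝ) (W : V → V → ℝ) (hρ : ρ ≠ 0) (u : V → ℝ) (x : V) :
    opL μ W u x + ρ / volV μ = ρ * exp (u x) * Rcurv μ W ρ u x := by
  rw [Rcurv, exp_neg]
  field_simp

theorem intV_mul_exp_mul_secondFlowField (hμ : ∀ x, 0 < μ x) (W : V → V → ℝ) (ρ : ℝ) (hh : h ≠ 0)
    (u : V → ℝ) : intV μ (fun x => h x * (exp (u x) * secondFlowField μ W ρ h u x)) = 0 := by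
  have hα : alphaC μ W ρ h u * intV μ (fun x => h x ^ 2 * exp (u x)) =
      intV μ fun x => h x * Rcurv μ W ρ u x * exp (u x) :=
    div_mul_cancel₀ _ (intV_sq_mul_exp_ne_zero hμ hh u)
  calc intV μ (fun x => h x * (exp (u x) * secondFlowField μ W ρ h u x))
      = intV μ fun x => alphaC μ W ρ h u * (h x ^ 2 * exp (u x)) +
          (-1) * (h x * Rcurv μ W ρ u x * exp (u x)) := by
        congr! 2 with x
        rw [secondFlowField]
        ring
    _ = 0 := by rw [intV_add, intV_const_mul, intV_const_mul, hα]; ring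

theorem intV_opL_add_mul_secondFlowField (hμ : ∀ x, 0 < μ x) (W : V → V → ℝ) (hρ : ρ ≠ 0)
    (hh : h ≠ 0) (u : V → ℝ) :
    intV μ (fun x => (opL μ W u x + ρ / volV μ) * secondFlowField μ W ρ h u x) =
      -secondFlowDissipation μ W ρ h u := by
  calc intV μ (fun x => (opL μ W u x + ρ / volV μ) * secondFlowField μ W ρ h u x)
      = intV μ fun x =>
          ρ * alphaC μ W ρ h u * (h x * (exp (u x) * secondFlowField μ W ρ h u x)) +
          -ρ * (exp (u x) * secondFlowField μ W ρ h u x ^ 2) := by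
        congr! 2 with x
        rw [opL_add_eq_mul_Rcurv μ W hρ, secondFlowField]
        ring
    _ = -secondFlowDissipation μ W ρ h u := by
        rw [intV_add, intV_const_mul, intV_const_mul, intV_mul_exp_mul_secondFlowField hμ W ρ hh,
          secondFlowDissipation]
        ring

theorem intV_mul_exp_eq_of_isTimeChangedSolution (hμ : ∀ x, 0 < μ x) (hh : h ≠ 0)
    {u : ℝ → V → ℝ} (hu : IsTimeChangedSolution (secondFlowField μ W ρ h) u) {t : ℝ}
    (ht : 0 ≤ t) :
    intV μ (fun x => h x * exp (u t x)) = intV μ (fun x => h x * exp (u 0 x)) := by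
  have hderiv (s : ℝ) (hs : 0 ≤ s) :
      HasDerivAt (fun r => intV μ fun x => h x * exp (u r x)) 0 s := by
    obtain ⟨c, -, hc⟩ := hu s hs
    refine (hasDerivAt_intV μ fun x =>
      ((hasDerivAt_pi.1 hc x).exp.const_mul (h x))).congr_deriv ?_
    simp only [Pi.smul_apply, smul_eq_mul, mul_left_comm _ c, intV_const_mul,
      intV_mul_exp_mul_secondFlowField hμ W ρ hh, mul_zero]
  exact constant_of_has_deriv_right_zero (HasDerivAt.continuousOn fun s hs => hderiv s hs.1)
    (fun s hs => (hderiv s hs.1).hasDerivWithinAt) t (Set.right_mem_Icc.2 ht)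

theorem hasDerivAt_meanFieldEnergy_of_secondFlow (hμ : ∀ x, 0 < μ x) (hW : ∀ x y, W x y = W y x)
    (hρ : ρ ≠ 0) (hh : h ≠ 0) {u : ℝ → V → ℝ} {t c : ℝ}
    (hu : HasDerivAt u (c • secondFlowField μ W ρ h (u t)) t) :
    HasDerivAt (fun s => meanFieldEnergy μ W ρ (u s))
      (c * -secondFlowDissipation μ W ρ h (u t)) t := by
  refine (hasDerivAt_meanFieldEnergy (fun x => (hμ x).ne') hW ρ hu).congr_deriv ?_
  simp only [Pi.smul_apply, smul_eq_mul, mul_left_comm _ c, intV_const_mul,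
    intV_opL_add_mul_secondFlowField hμ W hρ hh]

theorem meanFieldEnergy_le_of_isTimeChangedSolution (hμ : ∀ x, 0 < μ x)
    (hW : ∀ x y, W x y = W y x) (hρ : 0 < ρ) (hh : h ≠ 0) {u : ℝ → V → ℝ}
    (hu : IsTimeChangedSolution (secondFlowField μ W ρ h) u) {t : ℝ} (ht : 0 ≤ t) :
    meanFieldEnergy μ W ρ (u t) ≤ meanFieldEnergy μ W ρ (u 0) := by
  choose! c hc₀ hc using hu
  have hderiv (s : ℝ) (hs : 0 ≤ s) :=
    hasDerivAt_meanFieldEnergy_of_secondFlow hμ hW hρ.ne' hh (hc s hs)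
  refine antitoneOn_of_hasDerivWithinAt_nonpos (convex_Ici 0) (HasDerivAt.continuousOn hderiv)
    (fun s hs => (hderiv s (interior_subset hs)).hasDerivWithinAt) (fun s hs => ?_)
    Set.self_mem_Ici ht ht
  exact mul_nonpos_of_nonneg_of_nonpos (hc₀ s (interior_subset hs))
    (neg_nonpos.2 (secondFlowDissipation_nonneg (fun x => (hμ x).le) W hρ.le h (u s)))

theorem exists_norm_le_of_isTimeChangedSolution [Nonempty V] (hμ : ∀ x, 0 < μ x)
    (hWsymm : ∀ x y, W x y = W y x) (hW : ∀ x y, x ≠ y → 0 ≤ W x y)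
    (hconn : ∀ x y, Relation.ReflTransGen (fun a b => 0 < W a b) x y) (hρ : 0 < ρ)
    {u₀ : V → ℝ} (hu₀ : intV μ (fun x => h x * exp (u₀ x)) = 1) :
    ∃ M, ∀ u : ℝ → V → ℝ, u 0 = u₀ → IsTimeChangedSolution (secondFlowField μ W ρ h) u →
      ∀ t, 0 ≤ t → ‖u t‖ ≤ M := by
  have hh := ne_zero_of_intV_mul_exp_eq_one hu₀
  obtain ⟨M, hM⟩ :=
    exists_norm_le_of_meanFieldEnergy_le hμ hW hconn hρ h (meanFieldEnergy μ W ρ u₀)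
  refine ⟨M, ?_⟩
  rintro u rfl hu t ht
  exact hM (u t) ((intV_mul_exp_eq_of_isTimeChangedSolution hμ hh hu ht).trans hu₀)
    (meanFieldEnergy_le_of_isTimeChangedSolution hμ hWsymm hρ hh hu ht)

theorem opL_eq_of_secondFlowField_eq_zero [Nonempty V] (hμ : ∀ x, 0 < μ x)
    (hW : ∀ x y, W x y = W y x) (hρ : ρ ≠ 0) {w : V → ℝ}
    (hw : intV μ (fun x => h x * exp (w x)) = 1) (hF : secondFlowField μ W ρ h w = 0) (x : V) :
    opL μ W w x = ρ * h x * exp (w x) - ρ / volV μ := by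
  have hL (y : V) : opL μ W w y + ρ / volV μ = ρ * alphaC μ W ρ h w * (h y * exp (w y)) := by
    rw [opL_add_eq_mul_Rcurv μ W hρ, ← sub_eq_zero.1 (congrFun hF y)]
    ring
  have hα : ρ * alphaC μ W ρ h w = ρ := by
    calc ρ * alphaC μ W ρ h w = intV μ fun y => opL μ W w y + ρ / volV μ := by
          simp only [hL, intV_const_mul, hw, mul_one]
      _ = ρ := by
          rw [intV_add, intV_opL (fun y => (hμ y).ne') hW, intV_const, zero_add,
            div_mul_cancel₀ _ (volV_pos hμ).ne']
  linear_combination hL x + h x * exp (w x) * hα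

theorem exists_tendsto_secondFlow_eq_meanField [Nonempty V] (hμ : ∀ x, 0 < μ x)
    (hW : ∀ x y, W x y = W y x) (hρ : 0 < ρ) {u : ℝ → V → ℝ}
    (hu : ∀ t, 0 ≤ t → HasDerivAt u (secondFlowField μ W ρ h (u t)) t)
    (hu₀ : intV μ (fun x => h x * exp (u 0 x)) = 1) {M : ℝ} (hM : ∀ t, 0 ≤ t → ‖u t‖ ≤ M) :
    ∃ s : ℕ → ℝ, StrictMono s ∧ Tendsto s atTop atTop ∧
      ∃ w : V → ℝ, intV μ (fun x => h x * exp (w x)) = 1 ∧ Tendsto (fun n => u (s n)) atTop (𝓝 w) ∧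
        ∀ x, opL μ W w x = ρ * h x * exp (w x) - ρ / volV μ := by
  have hh := ne_zero_of_intV_mul_exp_eq_one hu₀
  have hconstraint (t : ℝ) (ht : 0 ≤ t) : intV μ (fun x => h x * exp (u t x)) = 1 :=
    (intV_mul_exp_eq_of_isTimeChangedSolution hμ hh
      (isTimeChangedSolution_of_hasDerivAt hu) ht).trans hu₀
  obtain ⟨s, hs, hns, w, hw, hDw⟩ := exists_tendsto_dissipation_eq_zero
    (isCompact_closedBall (0 : V → ℝ) M) (continuous_meanFieldEnergy μ W ρ)
    (continuous_secondFlowDissipation hμ W ρ hh)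
    (secondFlowDissipation_nonneg (fun x => (hμ x).le) W hρ.le h)
    (fun t ht => mem_closedBall_zero_iff.2 (hM t ht))
    (fun t ht => by
      simpa only [one_mul] using hasDerivAt_meanFieldEnergy_of_secondFlow hμ hW hρ.ne' hh
        (c := 1) (by simpa only [one_smul] using hu t ht))
  have hcont : Continuous fun v : V → ℝ => intV μ fun x => h x * exp (v x) := by
    unfold intV
    fun_prop
  have hw₁ : intV μ (fun x => h x * exp (w x)) = 1 :=
    (isClosed_eq hcont continuous_const).mem_of_tendsto hw <|
      .of_forall fun n => hconstraint (s n) (n.cast_nonneg.trans (hns n))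
  exact ⟨s, hs, tendsto_atTop_mono hns tendsto_natCast_atTop_atTop, w, hw₁, hw,
    opL_eq_of_secondFlowField_eq_zero hμ hW hρ.ne' hw₁
      ((secondFlowDissipation_eq_zero_iff hμ hρ.ne').1 hDw)⟩

end SecondFlow

theorem second_flow_global_convergence_general [Fintype V] [Nonempty V] [DecidableEq V]
    (μ : V → ℝ) (W : V → V → ℝ)
    (hμ : ∀ x, 0 < μ x)
    (hWsym : ∀ x y, W x y = W y x)
    (hWnonneg : ∀ x y, x ≠ y → 0 ≤ W x y)
    (hconn : ∀ x y, Relation.ReflTransGen (fun a b => 0 < W a b) x y)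
    (ρ : ℝ) (hρ : 0 < ρ)
    (h : V → ℝ)
    (u₀ : V → ℝ) (hu₀ : intV μ (fun x => h x * Real.exp (u₀ x)) = 1) :
    ∃ u : ℝ → V → ℝ,
      (u 0 = u₀) ∧
      (∀ x, ∀ t ∈ Set.Ici (0 : ℝ),
        HasDerivAt (fun s => u s x)
          (alphaC μ W ρ h (u t) * h x - Rcurv μ W ρ (u t) x) t) ∧
      (∀ v : ℝ → V → ℝ, v 0 = u₀ →
        (∀ x, ∀ t ∈ Set.Ici (0 : ℝ),
          HasDerivAt (fun s => v s x)
            (alphaC μ W ρ h (v t) * h x - Rcurv μ W ρ (v t) x) t) →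
        ∀ t ∈ Set.Ici (0 : ℝ), v t = u t) ∧
      (∃ tn : ℕ → ℝ, StrictMono tn ∧ Filter.Tendsto tn Filter.atTop Filter.atTop ∧
        ∃ u_inf : V → ℝ, intV μ (fun x => h x * Real.exp (u_inf x)) = 1 ∧
          TendstoUniformly (fun n x => u (tn n) x) u_inf Filter.atTop ∧
          ∀ x, opL μ W u_inf x = ρ * h x * Real.exp (u_inf x) - ρ / volV μ) := by
  have hF : ContDiff ℝ 1 (secondFlowField μ W ρ h) :=
    contDiff_secondFlowField hμ W ρ (ne_zero_of_intV_mul_exp_eq_one hu₀)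
  obtain ⟨M, hM⟩ := exists_norm_le_of_isTimeChangedSolution hμ hWsym hWnonneg hconn hρ hu₀
  obtain ⟨u, rfl, hu⟩ := exists_forward_solution_of_bounded hF hM
  refine ⟨u, rfl, fun x t ht => hasDerivAt_pi.1 (hu t ht) x, fun v hv₀ hv t ht => ?_, ?_⟩
  · exact forward_solution_unique hF.locallyLipschitz
      (fun s hs => hasDerivAt_pi.2 fun x => hv x s hs) hu hv₀ ht
  · obtain ⟨s, hs, hs_top, w, hw₁, hw, hweq⟩ := exists_tendsto_secondFlow_eq_meanField
      hμ hWsym hρ hu hu₀ (hM u rfl (isTimeChangedSolution_of_hasDerivAt hu))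
    have hunif : TendstoUniformly (fun n x => u (s n) x) w atTop := fun U hU =>
      eventually_all.2 fun x => Uniform.tendsto_nhds_right.1 (tendsto_pi_nhds.1 hw x) hU
    exact ⟨s, hs, hs_top, w, hw₁, hunif, hweq⟩

/-- (Global existence and subsequential convergence of the second flow) The second flow with
initial datum in `{∫_V h e^u dμ = 1}` has a unique global solution, and along a sequence of
times tending to infinity it converges uniformly to a solution `u_∞` of the fractional mean
field equation with `∫_V h e^{u_∞} dμ = 1`. -/
theorem second_flow_global_convergence [Fintype V] [Nonempty V] [DecidableEq V]
    (μ : V → ℝ) (W : V → V → ℝ)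
    (hμ : ∀ x, 0 < μ x)
    (hWsym : ∀ x y, W x y = W y x)
    (hWpos : ∀ x y, x ≠ y → 0 < W x y)
    (ρ : ℝ) (hρ : 0 < ρ)
    (h : V → ℝ) (hpos : ∃ x, 0 < h x) (hneg : ∃ x, h x < 0)
    (u₀ : V → ℝ) (hu₀ : intV μ (fun x => h x * Real.exp (u₀ x)) = 1) :
    ∃ u : ℝ → V → ℝ,
      (u 0 = u₀) ∧
      (∀ x, ∀ t ∈ Set.Ici (0 : ℝ),
        HasDerivAt (fun s => u s x)
          (alphaC μ W ρ h (u t) * h x - Rcurv μ W ρ (u t) x) t) ∧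
      (∀ v : ℝ → V → ℝ, v 0 = u₀ →
        (∀ x, ∀ t ∈ Set.Ici (0 : ℝ),
          HasDerivAt (fun s => v s x)
            (alphaC μ W ρ h (v t) * h x - Rcurv μ W ρ (v t) x) t) →
        ∀ t ∈ Set.Ici (0 : ℝ), v t = u t) ∧
      (∃ tn : ℕ → ℝ, StrictMono tn ∧ Filter.Tendsto tn Filter.atTop Filter.atTop ∧
        ∃ u_inf : V → ℝ, intV μ (fun x => h x * Real.exp (u_inf x)) = 1 ∧
          TendstoUniformly (fun n x => u (tn n) x) u_inf Filter.atTop ∧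
          ∀ x, opL μ W u_inf x = ρ * h x * Real.exp (u_inf x) - ρ / volV μ) :=
  second_flow_global_convergence_general μ W hμ hWsym (fun x y hxy => (hWpos x y hxy).le)
    (fun x y => (eq_or_ne x y).elim (fun hxy => hxy ▸ .refl) fun hxy => .single (hWpos x y hxy))
    ρ hρ h u₀ hu₀
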